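/- arXiv:1910.12109 — 2 statements merged into one kernel-verified Lean document; each statement's English description precedes it below -/
import Mathlib

section
/- Every finite simple graph that contains no induced claw, no induced co-claw, no clique of size 4, and no independent set of size 4 has at most 9 vertices; moreover, there exists such a graph with exactly 9 vertices (the 3×3 rook's graph, whose vertices are the pairs (i,j) with i,j ∈ {1,2,3} and in which two distinct pairs are adjacent if and only if they agree in one coordinate). -/
open SimpleGraph

/-- `G` contains an induced copy of `H`. -/
def HasInducedCopy {α β : Type*} (H : SimpleGraph α) (G : SimpleGraph β) : Prop :=
  Nonempty (H ↪g G)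

/-- The claw `K_{1,3}`. -/
def claw : SimpleGraph (Fin 4) := SimpleGraph.fromRel (fun u _ => u = 0)

/-- The co-claw: the complement of the claw. -/
def coClaw : SimpleGraph (Fin 4) := clawᶜ

/-- The `3 × 3` rook's graph: two distinct pairs are adjacent iff they agree in one
coordinate. -/
def rookGraph : SimpleGraph (Fin 3 × Fin 3) :=
  SimpleGraph.fromRel (fun u v => u.1 = v.1 ∨ u.2 = v.2)

/-!
By excluding the claw and `K₄`, no neighbourhood contains a homogeneous triple (a triangle or an
independent triple); by excluding the complements, neither does any non-neighbourhood. As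
`R(3, 3) = 6`, both have at most five elements, so a vertex `v` of a graph with ten or more vertices
has, up to complementation, degree five and codegree at least four. Each non-neighbour of `v` then
sees at least three of the five neighbours, whereas each neighbour sees at most two non-neighbours,
so there are at most `10 / 3` non-neighbours, a contradiction. Since the excluded subgraphs are
excluded from all finite induced subgraphs, the bound needs no finiteness assumption.

The rook's graph is self-complementary, which halves its verification.
-/

section Star

variable {V : Type*} {G : SimpleGraph V} {n : ℕ}

theorem not_starGraph_isIndContained_iff :
    ¬ starGraph (0 : Fin (n + 1)) ⊴ G ↔ ∀ v, Gᶜ.CliqueFreeOn (G.neighborSet v) n := by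
  simp_rw [← not_exists_not, not_iff_not, ← cliqueFree_induce_iff,
    not_cliqueFree_iff_top_isContained]
  constructor
  · rintro ⟨f⟩
    have hadj (i : Fin n) : G.Adj (f 0) (f i.succ) := by simp [Fin.succ_ne_zero, Ne.symm]
    refine ⟨f 0, ⟨⟨fun i => ⟨f i.succ, hadj i⟩, fun {i j} hij => ?_⟩, fun i j hij => ?_⟩⟩
    · simpa [Fin.succ_ne_zero] using hij
    · exact Fin.succ_injective n (f.injective (congrArg Subtype.val hij))
  · rintro ⟨v, ⟨g⟩⟩
    have hv (i : Fin n) : G.Adj v (g i) := (g i).2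
    have hg : Function.Injective fun i => (g i : V) := Subtype.val_injective.comp g.injective
    have hleaf (i j : Fin n) : ¬ G.Adj (g i) (g j) := by
      obtain rfl | hij := eq_or_ne i j
      · exact G.irrefl
      · exact (g.toHom.map_adj (show (⊤ : SimpleGraph _).Adj i j from hij)).2
    refine ⟨⟨⟨Fin.cons v fun i => g i, Fin.cons_injective_iff.mpr ⟨?_, hg⟩⟩, ?_⟩⟩
    · rintro ⟨i, hi⟩
      exact (hv i).ne' hi
    · intro i j
      cases i using Fin.cases <;> cases j using Fin.cases <;>
        simp [hv, (hv _).symm, hleaf, Fin.succ_ne_zero, (Fin.succ_ne_zero _).symm]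

theorem not_hasInducedCopy_claw_iff :
    ¬ HasInducedCopy claw G ↔ ∀ v, Gᶜ.CliqueFreeOn (G.neighborSet v) 3 :=
  not_starGraph_isIndContained_iff

theorem hasInducedCopy_coClaw_iff : HasInducedCopy coClaw G ↔ HasInducedCopy claw Gᶜ := by
  have h := compl_isIndContained_compl (G := claw) (H := Gᶜ)
  rwa [compl_compl] at h

theorem cliqueFreeOn_neighborSet (hG : G.CliqueFree (n + 1)) (v : V) :
    G.CliqueFreeOn (G.neighborSet v) n := by
  simpa using CliqueFreeOn.of_succ G ((cliqueFreeOn_univ G).mpr hG) (Set.mem_univ v)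

end Star

section Homogeneous

open Finset

variable {V : Type*} {G : SimpleGraph V} {n : ℕ}

/-- `s` contains no homogeneous set of size `n`, i.e. neither an `n`-clique nor an independent
`n`-set of `G`. Independent sets are encoded as cliques of `Gᶜ`, which makes the notion visibly
self-complementary. -/
def HomogeneousFreeOn (G : SimpleGraph V) (s : Set V) (n : ℕ) : Prop :=
  G.CliqueFreeOn s n ∧ Gᶜ.CliqueFreeOn s n

/-- Every neighbourhood and every non-neighbourhood is `HomogeneousFreeOn`. For `n = 3` this
expresses the four excluded subgraphs (the claw, the co-claw, `K₄` and its complement) through a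
single local condition. -/
def LocallyHomogeneousFree (G : SimpleGraph V) (n : ℕ) : Prop :=
  ∀ v, HomogeneousFreeOn G (G.neighborSet v) n ∧ HomogeneousFreeOn G (Gᶜ.neighborSet v) n

theorem HomogeneousFreeOn.compl {s : Set V} (h : HomogeneousFreeOn G s n) :
    HomogeneousFreeOn Gᶜ s n :=
  ⟨h.2, (compl_compl G).symm ▸ h.1⟩

theorem LocallyHomogeneousFree.compl (h : LocallyHomogeneousFree G n) :
    LocallyHomogeneousFree Gᶜ n :=
  fun v => ⟨(h v).2.compl, (compl_compl G).symm ▸ (h v).1.compl⟩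

theorem locallyHomogeneousFree_three (hclaw : ¬ HasInducedCopy claw G)
    (hcoClaw : ¬ HasInducedCopy coClaw G) (hclique : G.CliqueFree 4) (hindep : Gᶜ.CliqueFree 4) :
    LocallyHomogeneousFree G 3 := by
  rw [hasInducedCopy_coClaw_iff, not_hasInducedCopy_claw_iff, compl_compl] at hcoClaw
  rw [not_hasInducedCopy_claw_iff] at hclaw
  exact fun v => ⟨⟨cliqueFreeOn_neighborSet hclique v, hclaw v⟩,
    ⟨hcoClaw v, cliqueFreeOn_neighborSet hindep v⟩⟩

theorem card_le_of_cliqueFreeOn_two {s : Finset V} (hs : G.CliqueFreeOn s 2)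
    (hs' : Gᶜ.CliqueFreeOn s (n + 1)) : #s ≤ n := by
  by_contra! hn
  obtain ⟨t, hts, ht⟩ := exists_subset_card_eq (Nat.succ_le_of_lt hn)
  refine hs' (coe_subset.mpr hts) ⟨fun a ha b hb hab => ?_, ht⟩
  exact ⟨hab, (cliqueFreeOn_two G).mp hs (hts ha) (hts hb) hab⟩

theorem HomogeneousFreeOn.card_filter_adj_le_two [DecidableRel G.Adj] {s : Finset V}
    (h : HomogeneousFreeOn G s 3) {a : V} (ha : a ∈ s) : #{x ∈ s | G.Adj a x} ≤ 2 :=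
  card_le_of_cliqueFreeOn_two (h.1.of_succ G ha |>.subset G fun x hx => by simpa using hx)
    (h.2.subset Gᶜ (coe_subset.mpr (filter_subset _ _)))

theorem card_eq_card_filter_adj_add_card_filter_compl_adj [DecidableEq V] [DecidableRel G.Adj]
    {s : Finset V} {a : V} (ha : a ∈ s) :
    #s = #{x ∈ s | G.Adj a x} + #{x ∈ s | Gᶜ.Adj a x} + 1 := by
  have hnot : ({x ∈ s | ¬ G.Adj a x} : Finset V) = insert a {x ∈ s | Gᶜ.Adj a x} := by
    ext x
    obtain rfl | hx := eq_or_ne x a <;> simp [*, Ne.symm]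
  rw [← card_filter_add_card_filter_not (s := s) (G.Adj a), hnot,
    card_insert_of_notMem (by simp), add_assoc]

theorem HomogeneousFreeOn.card_le_five {s : Finset V} (h : HomogeneousFreeOn G s 3) :
    #s ≤ 5 := by
  classical
  obtain rfl | ⟨a, ha⟩ := s.eq_empty_or_nonempty
  · simp
  · have hadj := h.card_filter_adj_le_two ha
    have hnonadj := h.compl.card_filter_adj_le_two ha
    have hsplit := card_eq_card_filter_adj_add_card_filter_compl_adj (G := G) ha
    omega

end Homogeneous

section Counting

open Finset

variable {V : Type*} {G : SimpleGraph V}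

section LocallyFinite

variable {v : V} [Fintype (G.neighborSet v)]

theorem LocallyHomogeneousFree.degree_le_five (h : LocallyHomogeneousFree G 3) :
    G.degree v ≤ 5 :=
  HomogeneousFreeOn.card_le_five (G := G) (by simpa using (h v).1)

variable [DecidableRel G.Adj]

theorem LocallyHomogeneousFree.degree_le_card_filter_adj_add_three_of_adj
    (h : LocallyHomogeneousFree G 3) {a : V} (ha : G.Adj v a) :
    G.degree v ≤ #{x ∈ G.neighborFinset v | G.Adj a x} + 3 := by
  classical
  have ha' : a ∈ G.neighborFinset v := by simpa using ha
  have hN : HomogeneousFreeOn G (G.neighborFinset v) 3 := by simpa using (h v).1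
  have hnonadj := hN.compl.card_filter_adj_le_two ha'
  have hsplit := card_eq_card_filter_adj_add_card_filter_compl_adj (G := G) ha'
  rw [card_neighborFinset_eq_degree] at hsplit
  omega

theorem LocallyHomogeneousFree.degree_le_card_filter_adj_add_two_of_compl_adj
    (h : LocallyHomogeneousFree G 3) {b : V} (hb : Gᶜ.Adj v b) :
    G.degree v ≤ #{x ∈ G.neighborFinset v | G.Adj b x} + 2 := by
  have hmiss : #{x ∈ G.neighborFinset v | ¬ G.Adj b x} ≤ 2 := by
    -- An edge in this set would form a triangle with `v` in the non-neighbourhood of `b`.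
    refine card_le_of_cliqueFreeOn_two
      ((h b).2.1.of_succ G (hb.symm : v ∈ Gᶜ.neighborSet b) |>.subset G fun x hx => ?_)
      ((h v).1.2.subset Gᶜ fun x hx => ?_) <;>
    obtain ⟨hvx, hbx⟩ : G.Adj v x ∧ ¬ G.Adj b x := by simpa using hx
    · exact ⟨⟨fun hbx' => hb.2 (hbx' ▸ hvx), hbx⟩, hvx⟩
    · exact hvx
  have hsplit : #{x ∈ G.neighborFinset v | G.Adj b x} +
      #{x ∈ G.neighborFinset v | ¬ G.Adj b x} = G.degree v :=
    card_filter_add_card_filter_not _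
  omega

end LocallyFinite

section Finite

variable [Fintype V]

theorem LocallyHomogeneousFree.card_filter_adj_compl_neighborFinset_le [DecidableEq V]
    [DecidableRel G.Adj] (h : LocallyHomogeneousFree G 3) {v a : V} (ha : G.Adj v a) :
    #{x ∈ Gᶜ.neighborFinset v | G.Adj x a} ≤ 7 - G.degree v := by
  have hcommon : ({x ∈ G.neighborFinset a | G.Adj v x} : Finset V) =
      {x ∈ G.neighborFinset v | G.Adj a x} := by
    ext x
    simp [and_comm]
  have hnoncommon : ({x ∈ G.neighborFinset a | Gᶜ.Adj v x} : Finset V) =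
      {x ∈ Gᶜ.neighborFinset v | G.Adj x a} := by
    ext x
    simp [and_comm, G.adj_comm]
  have hva : v ∈ G.neighborFinset a := by simpa using ha.symm
  have hsplit := card_eq_card_filter_adj_add_card_filter_compl_adj (G := G) hva
  rw [hcommon, hnoncommon, card_neighborFinset_eq_degree] at hsplit
  have hdeg : G.degree a ≤ 5 := h.degree_le_five
  have hcard := h.degree_le_card_filter_adj_add_three_of_adj ha
  omega

theorem LocallyHomogeneousFree.degree_compl_mul_le [DecidableEq V] [DecidableRel G.Adj]
    (h : LocallyHomogeneousFree G 3) (v : V) :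
    Gᶜ.degree v * (G.degree v - 2) ≤ G.degree v * (7 - G.degree v) := by
  refine card_mul_le_card_mul G.Adj (s := Gᶜ.neighborFinset v) (t := G.neighborFinset v)
    (fun b hb => ?_) fun a ha => ?_
  · exact Nat.sub_le_of_le_add
      (h.degree_le_card_filter_adj_add_two_of_compl_adj (by simpa using hb))
  · exact h.card_filter_adj_compl_neighborFinset_le (by simpa using ha)

theorem LocallyHomogeneousFree.degree_compl_le_three [DecidableEq V] [DecidableRel G.Adj]
    (h : LocallyHomogeneousFree G 3) {v : V} (hv : G.degree v = 5) : Gᶜ.degree v ≤ 3 := by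
  have hcount := h.degree_compl_mul_le v
  rw [hv] at hcount
  omega

theorem LocallyHomogeneousFree.card_le_nine (h : LocallyHomogeneousFree G 3) :
    Fintype.card V ≤ 9 := by
  classical
  obtain _ | ⟨⟨v⟩⟩ := isEmpty_or_nonempty V
  · simp
  have hcompl := G.degree_compl v
  have hcompl' := Gᶜ.degree_compl v
  have hlt := G.degree_lt_card_verts v
  have hdeg : G.degree v ≤ 5 := h.degree_le_five
  have hdeg' : Gᶜ.degree v ≤ 5 := h.compl.degree_le_five
  have hfive : G.degree v = 5 → Gᶜ.degree v ≤ 3 := h.degree_compl_le_three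
  have hfive' : Gᶜ.degree v = 5 → Gᶜᶜ.degree v ≤ 3 := h.compl.degree_compl_le_three
  omega

end Finite

end Counting

section Rook

theorem rookGraph_adj {u v : Fin 3 × Fin 3} :
    rookGraph.Adj u v ↔ u ≠ v ∧ (u.1 = v.1 ∨ u.2 = v.2) := by
  simp only [rookGraph, fromRel_adj, eq_comm (a := v.1), eq_comm (a := v.2), or_self]

/-- The self-complementarity of the rook's graph. Passing to the sum and the difference of the
coordinates modulo 3 turns the rows and columns into the two families of diagonals, and distinct
cells lie on a common diagonal exactly when they share neither a row nor a column. -/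
def rookGraphIsoCompl : rookGraph ≃g rookGraphᶜ where
  toFun u := (u.1 + u.2, u.1 - u.2)
  invFun u := (-(u.1 + u.2), u.2 - u.1)
  left_inv := by decide
  right_inv := by decide
  map_rel_iff' {u v} := by
    simp only [compl_adj, rookGraph_adj]
    revert u v
    decide

theorem rookGraph_compl_colorable : rookGraphᶜ.Colorable 3 :=
  ⟨Coloring.mk Prod.fst fun {u v} h => by simp_all [rookGraph_adj]⟩

theorem rookGraph_compl_cliqueFree_four : rookGraphᶜ.CliqueFree 4 :=
  rookGraph_compl_colorable.cliqueFree (by simp)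

theorem rookGraph_cliqueFree_four : rookGraph.CliqueFree 4 :=
  rookGraph_compl_cliqueFree_four.comap rookGraphIsoCompl.isContained

theorem rookGraph_not_hasInducedCopy_claw : ¬ HasInducedCopy claw rookGraph := by
  refine not_hasInducedCopy_claw_iff.mpr fun v s hs h => ?_
  obtain ⟨a, b, c, hab, hac, hbc, rfl⟩ := is3Clique_iff.mp h
  have hva : rookGraph.Adj v a := hs (by simp)
  have hvb : rookGraph.Adj v b := hs (by simp)
  have hvc : rookGraph.Adj v c := hs (by simp)
  simp only [compl_adj, rookGraph_adj] at hab hac hbc hva hvb hvc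
  -- Two of `a`, `b`, `c` agree with `v` in the same coordinate, hence with each other.
  grind

theorem rookGraph_not_hasInducedCopy_coClaw : ¬ HasInducedCopy coClaw rookGraph := fun h =>
  rookGraph_not_hasInducedCopy_claw <|
    IsIndContained.trans (hasInducedCopy_coClaw_iff.mp h) rookGraphIsoCompl.isIndContained'

end Rook

theorem claw_coClaw_K4_coK4_free_max_nine_general :
    (∀ (V : Type*) (G : SimpleGraph V),
      ¬ HasInducedCopy claw G → ¬ HasInducedCopy coClaw G →
      G.CliqueFree 4 → Gᶜ.CliqueFree 4 → ENat.card V ≤ 9) ∧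
    (¬ HasInducedCopy claw rookGraph ∧ ¬ HasInducedCopy coClaw rookGraph ∧
      rookGraph.CliqueFree 4 ∧ rookGraphᶜ.CliqueFree 4 ∧
      Fintype.card (Fin 3 × Fin 3) = 9) := by
  refine ⟨fun V G hclaw hcoClaw hclique hindep => ?_, rookGraph_not_hasInducedCopy_claw,
    rookGraph_not_hasInducedCopy_coClaw, rookGraph_cliqueFree_four,
    rookGraph_compl_cliqueFree_four, rfl⟩
  refine Cardinal.toENat_le_ofNat.mpr (Cardinal.card_le_of fun s => ?_)
  have hs : G.induce (s : Set V) ⊴ G := ⟨Embedding.induce _⟩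
  have hlocal : LocallyHomogeneousFree (G.induce (s : Set V)) 3 :=
    locallyHomogeneousFree_three (fun h => hclaw (IsIndContained.trans h hs))
      (fun h => hcoClaw (IsIndContained.trans h hs))
      (hclique.comap hs.isContained) (hindep.comap hs.compl.isContained)
  simpa using hlocal.card_le_nine

/-- Every finite (claw, co-claw)-free graph with no clique of size 4 and no independent
set of size 4 has at most 9 vertices, and the `3 × 3` rook's graph is such a graph with
exactly 9 vertices. -/
theorem claw_coClaw_K4_coK4_free_max_nine :
    (∀ (V : Type) [Fintype V] (G : SimpleGraph V),
      ¬ HasInducedCopy claw G → ¬ HasInducedCopy coClaw G →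
      G.CliqueFree 4 → Gᶜ.CliqueFree 4 → Fintype.card V ≤ 9) ∧
    (¬ HasInducedCopy claw rookGraph ∧ ¬ HasInducedCopy coClaw rookGraph ∧
      rookGraph.CliqueFree 4 ∧ rookGraphᶜ.CliqueFree 4 ∧
      Fintype.card (Fin 3 × Fin 3) = 9) :=
  ⟨fun V _ G h₁ h₂ h₃ h₄ => by
    simpa using claw_coClaw_K4_coK4_free_max_nine_general.1 V G h₁ h₂ h₃ h₄,
    claw_coClaw_K4_coK4_free_max_nine_general.{0}.2⟩
end

section
/- Let G be a finite simple graph containing no induced co-diamond, no induced paw and no induced claw. Then: (i) if G is connected, then G is a path with at most 5 vertices, or a cycle with at most 6 vertices, or the complement of a graph in which every vertex has degree at most 1; (ii) if G has exactly two connected components, then either both components are complete graphs, or one component is a single vertex and the other is the complement of a graph in which every vertex has degree at most 1; (iii) if G has at least three connected components, then G has no edges. -/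
open SimpleGraph

/-- The diamond: `K_4` minus the edge `{2,3}`. -/
def diamond : SimpleGraph (Fin 4) := (⊤ : SimpleGraph (Fin 4)).deleteEdges {s(2, 3)}

/-- The co-diamond: the complement of the diamond. -/
def coDiamond : SimpleGraph (Fin 4) := diamondᶜ

/-- The paw: a triangle `{0,1,2}` plus the vertex `3` adjacent only to `0`. -/
def paw : SimpleGraph (Fin 4) :=
  SimpleGraph.fromRel (fun u v => (u ≠ 3 ∧ v ≠ 3) ∨ (u = 0 ∧ v = 3))

/-!
Olariu: in a connected paw-free graph a single triangle spreads along edges until every edge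
lies in a triangle and dominates the whole graph, so the graph is complete multipartite. A
claw-free complete multipartite graph with an edge has parts of size at most two, that is, its
complement has maximum degree at most one.

A connected claw- and triangle-free graph has maximum degree at most two, so a longest path is
Hamiltonian and its only possible chord joins its ends. Co-diamond-freeness makes the ends of
every path on six vertices adjacent, which rules out paths on seven vertices.

If `G` is disconnected, the vertices outside the component of an edge form a clique. Hence an edge
allows at most two components, and a non-complete component leaves room for a single isolated
vertex `b` only; deleting `b` leaves a complete multipartite graph, since an edge and a vertex not
dominated by it would form a co-diamond with `b`.
-/

section ForbiddenSubgraphs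

variable {V : Type*} {G : SimpleGraph V}

theorem adj_iff_adj_of_forall_lt {α : Type*} [LinearOrder α] {H : SimpleGraph α} {f : α → V}
    (h : ∀ i j, i < j → (G.Adj (f i) (f j) ↔ H.Adj i j)) (i j : α) :
    G.Adj (f i) (f j) ↔ H.Adj i j := by
  rcases lt_trichotomy i j with hij | rfl | hji
  · exact h i j hij
  · simp
  · rw [G.adj_comm, H.adj_comm, h j i hji]

theorem hasInducedCopy_of_forall_lt {α : Type*} [LinearOrder α] {H : SimpleGraph α} (f : α → V)
    (hne : ∀ i j, i < j → f i ≠ f j) (hadj : ∀ i j, i < j → (G.Adj (f i) (f j) ↔ H.Adj i j)) :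
    HasInducedCopy H G :=
  ⟨⟨⟨f, Function.Injective.of_lt_imp_ne hne⟩, adj_iff_adj_of_forall_lt hadj _ _⟩⟩

theorem HasInducedCopy.of_induce {α : Type*} {H : SimpleGraph α} {s : Set V}
    (h : HasInducedCopy H (G.induce s)) : HasInducedCopy H G :=
  h.map (Embedding.induce s).comp

theorem adj_of_coDiamond_free (hco : ¬ HasInducedCopy coDiamond G) {a b c d : V}
    (hab : G.Adj a b) (hac : ¬ G.Adj a c) (hbc : ¬ G.Adj b c) (had : ¬ G.Adj a d)
    (hbd : ¬ G.Adj b d) (hcd : c ≠ d) : G.Adj c d := by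
  by_contra hcd'
  have hca : c ≠ a := by rintro rfl; exact hbc hab.symm
  have hcb : c ≠ b := by rintro rfl; exact hac hab
  have hda : d ≠ a := by rintro rfl; exact hbd hab.symm
  have hdb : d ≠ b := by rintro rfl; exact had hab
  refine hco (hasInducedCopy_of_forall_lt ![c, d, a, b] ?_ ?_) <;>
    simp [Fin.forall_fin_succ, coDiamond, diamond, G.adj_comm, *, hab.ne]

theorem adj_or_adj_of_paw_free (hpaw : ¬ HasInducedCopy paw G) {a b c d : V}
    (hab : G.Adj a b) (hac : G.Adj a c) (hbc : G.Adj b c) (had : G.Adj a d) :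
    G.Adj b d ∨ G.Adj c d := by
  by_contra! ⟨hbd, hcd⟩
  have hbd' : b ≠ d := by rintro rfl; exact hcd hbc.symm
  have hcd' : c ≠ d := by rintro rfl; exact hbd hbc
  refine hpaw (hasInducedCopy_of_forall_lt ![a, b, c, d] ?_ ?_) <;>
    simp [Fin.forall_fin_succ, paw, *, hab.ne, hac.ne, hbc.ne, had.ne]

theorem adj_or_adj_or_adj_of_claw_free (hclaw : ¬ HasInducedCopy claw G) {x a b c : V}
    (hxa : G.Adj x a) (hxb : G.Adj x b) (hxc : G.Adj x c) (hab : a ≠ b) (hac : a ≠ c)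
    (hbc : b ≠ c) : G.Adj a b ∨ G.Adj a c ∨ G.Adj b c := by
  by_contra! ⟨hab', hac', hbc'⟩
  refine hclaw (hasInducedCopy_of_forall_lt ![x, a, b, c] ?_ ?_) <;>
    simp [Fin.forall_fin_succ, claw, *, hxa.ne, hxb.ne, hxc.ne]

end ForbiddenSubgraphs

section CompleteMultipartite

variable {V : Type*} {G : SimpleGraph V}

theorem reachable_induction {P : V → Prop} {u v : V} (h : G.Reachable u v)
    (hP : ∀ x y, G.Adj x y → P x → P y) (hu : P u) : P v := by
  rw [reachable_iff_reflTransGen] at h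
  induction h with
  | refl => exact hu
  | tail _ hadj ih => exact hP _ _ hadj ih

theorem exists_common_neighbor_of_paw_free (hpaw : ¬ HasInducedCopy paw G)
    (hG : G.Preconnected) (htri : ¬ G.CliqueFree 3) {u v : V} (huv : G.Adj u v) :
    ∃ t, G.Adj u t ∧ G.Adj v t := by
  have spread : ∀ {x y : V}, G.Adj x y → (∃ s t, G.Adj x s ∧ G.Adj x t ∧ G.Adj s t) →
      ∃ t, G.Adj x t ∧ G.Adj y t := by
    rintro x y hxy ⟨s, t, hxs, hxt, hst⟩
    rcases adj_or_adj_of_paw_free hpaw hxs hxt hst hxy with hsy | hty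
    · exact ⟨s, hxs, hsy.symm⟩
    · exact ⟨t, hxt, hty.symm⟩
  classical
  obtain ⟨s, hs⟩ := not_forall_not.1 htri
  obtain ⟨a, b, c, hab, hac, hbc, -⟩ := is3Clique_iff.1 hs
  refine spread huv (reachable_induction (P := fun x => ∃ s t, G.Adj x s ∧ G.Adj x t ∧ G.Adj s t)
    (hG a u) (fun x y hxy hx => ?_) ⟨b, c, hab, hac, hbc⟩)
  obtain ⟨t, hxt, hyt⟩ := spread hxy hx
  exact ⟨x, t, hxy.symm, hyt, hxt⟩

theorem adj_or_adj_of_path_of_paw_free (hpaw : ¬ HasInducedCopy paw G)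
    (hcommon : ∀ {x y : V}, G.Adj x y → ∃ t, G.Adj x t ∧ G.Adj y t) {u v x y : V}
    (huv : G.Adj u v) (hux : G.Adj u x) (hxy : G.Adj x y) : G.Adj u y ∨ G.Adj v y := by
  by_contra! ⟨huy, hvy⟩
  have not_adj_of_common : ∀ t, G.Adj u t → G.Adj v t → ¬ G.Adj t y := fun t hut hvt hty =>
    (adj_or_adj_of_paw_free hpaw hut.symm hvt.symm huv hty).elim huy hvy
  have hxv : ¬ G.Adj x v := fun h => not_adj_of_common x hux h.symm hxy
  obtain ⟨t, hut, hxt⟩ := hcommon hux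
  have htv : G.Adj t v := (adj_or_adj_of_paw_free hpaw hux hut hxt huv).resolve_left hxv
  have hty : G.Adj t y := (adj_or_adj_of_paw_free hpaw hux.symm hxt hut hxy).resolve_left huy
  exact not_adj_of_common t hut htv.symm hty

theorem cliqueFree_three_or_isCompleteMultipartite_of_paw_free
    (hpaw : ¬ HasInducedCopy paw G) (hG : G.Preconnected) :
    G.CliqueFree 3 ∨ G.IsCompleteMultipartite := by
  by_contra! ⟨htri, hmulti⟩
  obtain ⟨v, a, b, h⟩ := exists_isPathGraph3Compl_of_not_isCompleteMultipartite hmulti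
  have dominates : ∀ {u v x y : V}, G.Adj u v → G.Adj u x → G.Adj x y → G.Adj u y ∨ G.Adj v y :=
    adj_or_adj_of_path_of_paw_free hpaw (exists_common_neighbor_of_paw_free hpaw hG htri)
  have hdom : G.Adj a v ∨ G.Adj b v := by
    refine reachable_induction (P := fun w => G.Adj a w ∨ G.Adj b w) (hG a v) ?_
      (Or.inr h.adj.symm)
    rintro x y hxy (hax | hbx)
    · exact dominates h.adj hax hxy
    · exact (dominates h.adj.symm hbx hxy).symm
  exact hdom.elim (fun h' => h.not_adj_fst h'.symm) (fun h' => h.not_adj_snd h'.symm)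

theorem compl_neighborSet_subsingleton_of_isCompleteMultipartite
    (hclaw : ¬ HasInducedCopy claw G) (hG : G.IsCompleteMultipartite) {u : V}
    (hu : ¬ G.IsIsolated u) : (Gᶜ.neighborSet u).Subsingleton := by
  intro s hs t ht
  rw [mem_neighborSet, compl_adj] at hs ht
  by_contra hst
  obtain ⟨x, hux⟩ := exists_adj_iff_not_isIsolated.2 hu
  have hxs : G.Adj x s := by
    by_contra h
    exact hG.trans _ _ _ hs.2 (fun h' => h h'.symm) hux
  have hxt : G.Adj x t := by
    by_contra h
    exact hG.trans _ _ _ ht.2 (fun h' => h h'.symm) hux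
  rcases adj_or_adj_or_adj_of_claw_free hclaw hux.symm hxs hxt hs.1 ht.1 hst with h | h | h
  · exact hs.2 h
  · exact ht.2 h
  · exact hG.trans _ _ _ (fun h' => hs.2 h'.symm) ht.2 h

end CompleteMultipartite

section LongestPath

variable {V : Type*} {G : SimpleGraph V}

/-- A path of maximum length among all paths of `G`, whatever their ends. -/
def IsLongestPath {u v : V} (p : G.Walk u v) : Prop :=
  p.IsPath ∧ ∀ ⦃x y : V⦄ (q : G.Walk x y), q.IsPath → q.length ≤ p.length

namespace IsLongestPath

variable {u v : V} {p : G.Walk u v}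

theorem reverse (hp : IsLongestPath p) : IsLongestPath p.reverse :=
  ⟨hp.1.reverse, by simpa only [Walk.length_reverse] using hp.2⟩

theorem mem_support_of_adj_start (hp : IsLongestPath p) {y : V} (hy : G.Adj u y) :
    y ∈ p.support := by
  by_contra hmem
  have := hp.2 (p.cons hy.symm) ((Walk.cons_isPath_iff _ _).2 ⟨hp.1, hmem⟩)
  simp at this

theorem mem_support_of_adj_end (hp : IsLongestPath p) {y : V} (hy : G.Adj v y) :
    y ∈ p.support := by
  simpa using hp.reverse.mem_support_of_adj_start hy

end IsLongestPath

theorem exists_isLongestPath [Nonempty V] {n : ℕ}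
    (hn : ∀ ⦃x y : V⦄ (q : G.Walk x y), q.IsPath → q.length ≤ n) :
    ∃ (u v : V) (p : G.Walk u v), IsLongestPath p := by
  let lengths := {k | ∃ (u v : V) (p : G.Walk u v), p.IsPath ∧ p.length = k}
  have hfin : lengths.Finite := (Set.finite_le_nat n).subset fun k ⟨_, _, p, hp, hk⟩ =>
    hk ▸ hn p hp
  let x := Classical.arbitrary V
  obtain ⟨_, ⟨u, v, p, hp, rfl⟩, hmax⟩ := hfin.exists_maximal ⟨0, x, x, .nil, .nil, rfl⟩
  exact ⟨u, v, p, hp, fun x y q hq => (le_total _ _).elim (hmax ⟨x, y, q, hq, rfl⟩) id⟩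

end LongestPath

section MaxDegreeTwo

variable {V : Type*} {G : SimpleGraph V} {u v : V} {p : G.Walk u v}

theorem encard_neighborSet_le_two_of_claw_free (hclaw : ¬ HasInducedCopy claw G)
    (htri : G.CliqueFree 3) (x : V) : (G.neighborSet x).encard ≤ 2 := by
  by_contra! h
  obtain ⟨t, ht, hcard⟩ := Set.exists_subset_encard_eq (Order.add_one_le_of_lt h)
  obtain ⟨a, b, c, hab, hac, hbc, rfl⟩ := Set.encard_eq_three.1 hcard
  have hxa : G.Adj x a := ht (by simp)
  have hxb : G.Adj x b := ht (by simp)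
  have hxc : G.Adj x c := ht (by simp)
  classical
  rcases adj_or_adj_or_adj_of_claw_free hclaw hxa hxb hxc hab hac hbc with h | h | h
  · exact htri _ (is3Clique_triple_iff.2 ⟨hxa, hxb, h⟩)
  · exact htri _ (is3Clique_triple_iff.2 ⟨hxa, hxc, h⟩)
  · exact htri _ (is3Clique_triple_iff.2 ⟨hxb, hxc, h⟩)

theorem neighborSet_getVert_succ (hp : p.IsPath) {i : ℕ} (hi : i + 1 < p.length)
    (hdeg : (G.neighborSet (p.getVert (i + 1))).encard ≤ 2) :
    G.neighborSet (p.getVert (i + 1)) = {p.getVert i, p.getVert (i + 2)} := by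
  have hne : p.getVert i ≠ p.getVert (i + 2) := fun h => by
    have := hp.getVert_injOn (show i ≤ p.length by omega) (show i + 2 ≤ p.length by omega) h
    omega
  refine ((Set.toFinite _).eq_of_subset_of_encard_le ?_ ?_).symm
  · rintro _ (rfl | rfl)
    · exact (p.adj_getVert_succ (by omega)).symm
    · exact p.adj_getVert_succ hi
  · rwa [Set.encard_pair hne]

theorem succ_eq_or_ends_of_adj_getVert (hdeg : ∀ x, (G.neighborSet x).encard ≤ 2)
    (hp : p.IsPath) {i j : ℕ} (hij : i < j) (hj : j ≤ p.length)
    (hadj : G.Adj (p.getVert i) (p.getVert j)) : i + 1 = j ∨ i = 0 ∧ j = p.length := by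
  have inj : ∀ {k l : ℕ}, k ≤ p.length → l ≤ p.length → p.getVert k = p.getVert l → k = l :=
    fun hk hl h => hp.getVert_injOn hk hl h
  have interior : ∀ {k l : ℕ}, k + 1 < p.length → l ≤ p.length →
      G.Adj (p.getVert (k + 1)) (p.getVert l) → l = k ∨ l = k + 2 := by
    intro k l hk hl h
    rw [← mem_neighborSet, neighborSet_getVert_succ hp hk (hdeg _)] at h
    exact h.imp (inj hl (by omega)) (inj hl (by omega))
  by_cases hends : i = 0 ∧ j = p.length
  · exact Or.inr hends
  left
  by_cases hjlt : j < p.length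
  · obtain ⟨k, rfl⟩ : ∃ k, j = k + 1 := ⟨j - 1, by omega⟩
    have := interior hjlt (by omega) hadj.symm
    omega
  · obtain ⟨k, rfl⟩ : ∃ k, i = k + 1 := ⟨i - 1, by omega⟩
    have := interior (by omega) hj hadj
    omega

theorem isHamiltonian_of_isLongestPath [DecidableEq V] (hG : G.Preconnected)
    (hdeg : ∀ x, (G.neighborSet x).encard ≤ 2) (hp : IsLongestPath p) : p.IsHamiltonian := by
  refine hp.1.isHamiltonian_of_mem fun w =>
    reachable_induction (P := (· ∈ p.support)) (hG u w) ?_ p.start_mem_support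
  intro x y hxy hx
  obtain ⟨i, rfl, hi⟩ := Walk.mem_support_iff_exists_getVert.1 hx
  obtain rfl | rfl | ⟨k, rfl, hk⟩ : i = 0 ∨ i = p.length ∨ ∃ k, i = k + 1 ∧ k + 1 < p.length := by
    rcases i with _ | k
    · simp
    · rcases hi.eq_or_lt with h | h <;> simp [h]
  · exact hp.mem_support_of_adj_start (by simpa using hxy)
  · exact hp.mem_support_of_adj_end (by simpa using hxy)
  · rw [← mem_neighborSet, neighborSet_getVert_succ hp.1 hk (hdeg _)] at hxy
    rcases hxy with rfl | rfl <;> exact p.getVert_mem_support _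

theorem pathGraph_adj_iff_of_lt {n : ℕ} {i j : Fin n} (hij : i < j) :
    (pathGraph n).Adj i j ↔ i.val + 1 = j := by
  rw [pathGraph_adj]
  omega

theorem cycleGraph_adj_iff_of_lt {n : ℕ} {i j : Fin n} (hij : i < j) :
    (cycleGraph n).Adj i j ↔ i.val + 1 = j ∨ i.val = 0 ∧ j.val + 1 = n := by
  rw [cycleGraph_adj', Fin.sub_val_of_le hij.le, Fin.coe_sub_iff_lt.2 hij]
  omega

theorem nonempty_iso_pathGraph_of_isHamiltonian [DecidableEq V]
    (hdeg : ∀ x, (G.neighborSet x).encard ≤ 2) (hp : p.IsHamiltonian)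
    (hends : G.Adj u v → p.length ≤ 1) : Nonempty (G ≃g pathGraph p.support.length) := by
  suffices h : ∀ i j, i < j → (G.Adj (hp.getVertEquiv i) (hp.getVertEquiv j) ↔
      (pathGraph p.support.length).Adj i j) from
    ⟨(RelIso.mk hp.getVertEquiv (adj_iff_adj_of_forall_lt h _ _) :
      pathGraph p.support.length ≃g G).symm⟩
  intro i j hij
  have hj : j.val ≤ p.length := by have := p.length_support; omega
  rw [pathGraph_adj_iff_of_lt hij]
  refine ⟨fun hadj => ?_, fun hsucc => ?_⟩
  · rcases succ_eq_or_ends_of_adj_getVert hdeg hp.isPath hij hj hadj with hsucc | ⟨hi, hj'⟩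
    · exact hsucc
    · have := hends (by simpa [hi, hj'] using hadj)
      omega
  · simpa [hsucc] using p.adj_getVert_succ (i := i) (by omega)

theorem nonempty_iso_cycleGraph_of_isHamiltonian [DecidableEq V]
    (hdeg : ∀ x, (G.neighborSet x).encard ≤ 2) (hp : p.IsHamiltonian) (hends : G.Adj u v) :
    Nonempty (G ≃g cycleGraph p.support.length) := by
  suffices h : ∀ i j, i < j → (G.Adj (hp.getVertEquiv i) (hp.getVertEquiv j) ↔
      (cycleGraph p.support.length).Adj i j) from
    ⟨(RelIso.mk hp.getVertEquiv (adj_iff_adj_of_forall_lt h _ _) :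
      cycleGraph p.support.length ≃g G).symm⟩
  intro i j hij
  have hj : j.val ≤ p.length := by have := p.length_support; omega
  have hlast : j.val + 1 = p.support.length ↔ j.val = p.length := by
    have := p.length_support
    omega
  rw [cycleGraph_adj_iff_of_lt hij, hlast]
  refine ⟨succ_eq_or_ends_of_adj_getVert hdeg hp.isPath hij hj, ?_⟩
  rintro (hsucc | ⟨hi, hj'⟩)
  · simpa [hsucc] using p.adj_getVert_succ (i := i) (by omega)
  · simpa [hi, hj'] using hends

theorem adj_of_isPath_of_length_eq_five (hco : ¬ HasInducedCopy coDiamond G)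
    (hdeg : ∀ x, (G.neighborSet x).encard ≤ 2) (hp : p.IsPath) (hlen : p.length = 5) :
    G.Adj u v := by
  by_contra huv
  have not_adj : ∀ i j, i + 1 < j → j ≤ 5 → ¬ G.Adj (p.getVert i) (p.getVert j) := by
    intro i j hij hj hadj
    rcases succ_eq_or_ends_of_adj_getVert hdeg hp (by omega) (by omega) hadj with h | ⟨rfl, rfl⟩
    · omega
    · exact huv (by simpa using hadj)
  have hne : p.getVert 3 ≠ p.getVert 5 := fun h => by
    have := hp.getVert_injOn (show 3 ≤ p.length by omega) (show 5 ≤ p.length by omega) h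
    omega
  refine not_adj 3 5 (by omega) le_rfl <|
    adj_of_coDiamond_free hco (p.adj_getVert_succ (i := 0) (by omega))
      (not_adj 0 3 ?_ ?_) (not_adj 1 3 ?_ ?_) (not_adj 0 5 ?_ ?_) (not_adj 1 5 ?_ ?_) hne <;>
  omega

theorem length_le_five_of_isPath (hco : ¬ HasInducedCopy coDiamond G)
    (hdeg : ∀ x, (G.neighborSet x).encard ≤ 2) (hp : p.IsPath) : p.length ≤ 5 := by
  by_contra! hlen
  have hadj : G.Adj (p.getVert 0) (p.getVert 5) := by
    rw [p.getVert_zero]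
    exact adj_of_isPath_of_length_eq_five hco hdeg (hp.take 5) (by rw [Walk.take_length]; omega)
  have := succ_eq_or_ends_of_adj_getVert hdeg hp (by omega) (by omega) hadj
  omega

theorem nonempty_iso_pathGraph_or_cycleGraph (hco : ¬ HasInducedCopy coDiamond G)
    (hdeg : ∀ x, (G.neighborSet x).encard ≤ 2) (hG : G.Connected) :
    (∃ n : ℕ, n ≤ 5 ∧ Nonempty (G ≃g pathGraph n)) ∨
      ∃ n : ℕ, 3 ≤ n ∧ n ≤ 6 ∧ Nonempty (G ≃g cycleGraph n) := by
  classical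
  have := hG.nonempty
  obtain ⟨u, v, p, hp⟩ :=
    exists_isLongestPath fun x y (q : G.Walk x y) hq => length_le_five_of_isPath hco hdeg hq
  have hham := isHamiltonian_of_isLongestPath hG.preconnected hdeg hp
  have hle : p.length ≤ 5 := length_le_five_of_isPath hco hdeg hp.1
  have hsupp := p.length_support
  by_cases hcyc : 2 ≤ p.length ∧ G.Adj u v
  · exact Or.inr ⟨_, by omega, by omega,
      nonempty_iso_cycleGraph_of_isHamiltonian hdeg hham hcyc.2⟩
  · have hends : G.Adj u v → p.length ≤ 1 := fun h => by
      by_contra hlen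
      exact hcyc ⟨by omega, h⟩
    have hne : p.length ≠ 5 := fun hlen => by
      have := hends (adj_of_isPath_of_length_eq_five hco hdeg hp.1 hlen)
      omega
    exact Or.inl ⟨_, by omega, nonempty_iso_pathGraph_of_isHamiltonian hdeg hham hends⟩

end MaxDegreeTwo

section Disconnected

variable {V : Type*} {G : SimpleGraph V}

theorem adj_of_not_reachable_of_not_reachable (hco : ¬ HasInducedCopy coDiamond G)
    {u v c d : V} (huv : G.Adj u v) (hc : ¬ G.Reachable u c) (hd : ¬ G.Reachable u d)
    (hcd : c ≠ d) : G.Adj c d :=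
  adj_of_coDiamond_free hco huv (fun h => hc h.reachable)
    (fun h => hc (huv.reachable.trans h.reachable)) (fun h => hd h.reachable)
    (fun h => hd (huv.reachable.trans h.reachable)) hcd

theorem not_adj_of_three_le_card_connectedComponent (hco : ¬ HasInducedCopy coDiamond G)
    (hcard : 3 ≤ ENat.card G.ConnectedComponent) (u v : V) : ¬ G.Adj u v := by
  intro huv
  let cu := G.connectedComponentMk u
  obtain ⟨c, hcu, -⟩ := ENat.exists_ne_ne_of_three_le hcard cu cu
  obtain ⟨d, hdu, hdc⟩ := ENat.exists_ne_ne_of_three_le hcard cu c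
  induction c using ConnectedComponent.ind with | h x => ?_
  induction d using ConnectedComponent.ind with | h y => ?_
  rw [ne_comm, Ne, ConnectedComponent.eq] at hcu hdu hdc
  have hxy : x ≠ y := by rintro rfl; exact hdc .rfl
  exact hdc (adj_of_not_reachable_of_not_reachable hco huv hcu hdu hxy).reachable

theorem exists_not_reachable_of_card_connectedComponent_eq_two
    (hcard : Nat.card G.ConnectedComponent = 2) (u : V) :
    ∃ b, ¬ G.Reachable u b ∧ ∀ w, ¬ G.Reachable u w → G.Reachable b w := by
  obtain ⟨c, hc, huniq⟩ := (Nat.card_eq_two_iff' (G.connectedComponentMk u)).1 hcard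
  induction c using ConnectedComponent.ind with | h b => ?_
  refine ⟨b, fun h => hc (ConnectedComponent.sound h.symm), fun w hw => ?_⟩
  exact ConnectedComponent.exact (huniq _ fun h => hw (ConnectedComponent.exact h.symm)).symm

theorem isCompleteMultipartite_induce_compl_singleton (hco : ¬ HasInducedCopy coDiamond G)
    {b : V} (hb : G.IsIsolated b) : (G.induce {b}ᶜ).IsCompleteMultipartite := by
  by_contra hmulti
  obtain ⟨v, x, y, h⟩ := exists_isPathGraph3Compl_of_not_isCompleteMultipartite hmulti
  exact hb v (adj_of_coDiamond_free hco h.adj (fun h' => hb _ h'.symm) (fun h' => hb _ h'.symm)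
    (fun h' => h.not_adj_fst h'.symm) (fun h' => h.not_adj_snd h'.symm) (Ne.symm v.2))

theorem nonneighbors_subsingleton_of_isIsolated (hco : ¬ HasInducedCopy coDiamond G)
    (hclaw : ¬ HasInducedCopy claw G) {b u : V} (hb : G.IsIsolated b) (hu : ¬ G.IsIsolated u) :
    {w : V | w ≠ b ∧ w ≠ u ∧ ¬ G.Adj u w}.Subsingleton := by
  obtain ⟨x, hux⟩ := exists_adj_iff_not_isIsolated.2 hu
  have hub : u ≠ b := by rintro rfl; exact hu hb
  have hxb : x ≠ b := by rintro rfl; exact hb u hux.symm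
  let u' : ({b}ᶜ : Set V) := ⟨u, hub⟩
  have hu' : ¬ (G.induce {b}ᶜ).IsIsolated u' := fun h => h ⟨x, hxb⟩ hux
  have hsub : ((G.induce {b}ᶜ)ᶜ.neighborSet u').Subsingleton :=
    compl_neighborSet_subsingleton_of_isCompleteMultipartite (fun h => hclaw h.of_induce)
      (isCompleteMultipartite_induce_compl_singleton hco hb) hu'
  refine (hsub.image Subtype.val).anti ?_
  rintro w ⟨hwb, hwu, hw⟩
  exact ⟨⟨w, hwb⟩, ⟨fun h => hwu (congrArg Subtype.val h).symm, hw⟩, rfl⟩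

theorem complete_or_isIsolated_of_card_connectedComponent_eq_two
    (hco : ¬ HasInducedCopy coDiamond G) (hclaw : ¬ HasInducedCopy claw G)
    (hcard : Nat.card G.ConnectedComponent = 2) :
    (∀ u v : V, G.Reachable u v → u ≠ v → G.Adj u v) ∨
      ∃ b : V, G.IsIsolated b ∧
        ∀ u : V, u ≠ b → {w : V | w ≠ b ∧ w ≠ u ∧ ¬ G.Adj u w}.Subsingleton := by
  refine or_iff_not_imp_left.2 fun hcomplete => ?_
  push Not at hcomplete
  obtain ⟨u, v, huv, hne, hnadj⟩ := hcomplete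
  obtain ⟨b, hub, hreach⟩ := exists_not_reachable_of_card_connectedComponent_eq_two hcard u
  have hb : G.IsIsolated b := fun w hbw =>
    hnadj (adj_of_not_reachable_of_not_reachable hco hbw (fun h => hub h.symm)
      (fun h => hub (huv.trans h.symm)) hne)
  have not_isIsolated : ∀ w, w ≠ b → ¬ G.IsIsolated w := by
    intro w hwb
    rw [← neighborSet_nonempty]
    by_cases huw : G.Reachable u w
    · rcases eq_or_ne u w with rfl | h
      · exact huv.nonempty_neighborSet_left hne
      · exact huw.nonempty_neighborSet_right h
    · exact (hreach w huw).nonempty_neighborSet_right hwb.symm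
  exact ⟨b, hb, fun w hwb =>
    nonneighbors_subsingleton_of_isIsolated hco hclaw hb (not_isIsolated w hwb)⟩

end Disconnected

theorem coDiamond_paw_claw_free_structure_general {V : Type*} (G : SimpleGraph V)
    (hco : ¬ HasInducedCopy coDiamond G) (hpaw : ¬ HasInducedCopy paw G)
    (hclaw : ¬ HasInducedCopy claw G) :
    (G.Connected →
      (∃ n : ℕ, n ≤ 5 ∧ Nonempty (G ≃g pathGraph n)) ∨
      (∃ n : ℕ, 3 ≤ n ∧ n ≤ 6 ∧ Nonempty (G ≃g cycleGraph n)) ∨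
      (∀ v : V, (Gᶜ.neighborSet v).Subsingleton)) ∧
    (Nat.card G.ConnectedComponent = 2 →
      (∀ u v : V, G.Reachable u v → u ≠ v → G.Adj u v) ∨
      (∃ v : V, (∀ w, ¬ G.Adj v w) ∧
        ∀ u : V, u ≠ v → {w : V | w ≠ v ∧ w ≠ u ∧ ¬ G.Adj u w}.Subsingleton)) ∧
    (3 ≤ ENat.card G.ConnectedComponent → ∀ u v : V, ¬ G.Adj u v) := by
  refine ⟨fun hG => ?_, complete_or_isIsolated_of_card_connectedComponent_eq_two hco hclaw,
    not_adj_of_three_le_card_connectedComponent hco⟩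
  rw [← or_assoc]
  rcases cliqueFree_three_or_isCompleteMultipartite_of_paw_free hpaw hG.preconnected with
    htri | hmulti
  · exact Or.inl (nonempty_iso_pathGraph_or_cycleGraph hco
      (encard_neighborSet_le_two_of_claw_free hclaw htri) hG)
  · refine Or.inr fun v => ?_
    rcases subsingleton_or_nontrivial V with _ | _
    · exact Set.subsingleton_of_subsingleton
    · exact compl_neighborSet_subsingleton_of_isCompleteMultipartite hclaw hmulti
        (hG.preconnected.not_isIsolated v)

/-- Structure of finite `(co-diamond, paw, claw)`-free graphs `G`:
(i) if `G` is connected, it is a path on at most 5 vertices, a cycle on at most 6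
vertices, or the complement of a graph of maximum degree at most 1;
(ii) if `G` has exactly two connected components, then either every component is complete,
or one component is a single vertex and the rest is the complement of a graph of maximum
degree at most 1;
(iii) if `G` has at least three connected components, then `G` has no edges. -/
theorem coDiamond_paw_claw_free_structure {V : Type} [Fintype V] (G : SimpleGraph V)
    (h1 : ¬ HasInducedCopy coDiamond G) (h2 : ¬ HasInducedCopy paw G)
    (h3 : ¬ HasInducedCopy claw G) :
    (G.Connected →
      (∃ n : ℕ, n ≤ 5 ∧ Nonempty (G ≃g pathGraph n)) ∨
      (∃ n : ℕ, 3 ≤ n ∧ n ≤ 6 ∧ Nonempty (G ≃g cycleGraph n)) ∨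
      (∀ v : V, (Gᶜ.neighborSet v).Subsingleton)) ∧
    (Nat.card G.ConnectedComponent = 2 →
      (∀ u v : V, G.Reachable u v → u ≠ v → G.Adj u v) ∨
      (∃ v : V, (∀ w, ¬ G.Adj v w) ∧
        ∀ u : V, u ≠ v → {w : V | w ≠ v ∧ w ≠ u ∧ ¬ G.Adj u w}.Subsingleton)) ∧
    (3 ≤ Nat.card G.ConnectedComponent → ∀ u v : V, ¬ G.Adj u v) := by
  simpa only [ENat.card_eq_coe_natCard, Nat.ofNat_le_cast] using
    coDiamond_paw_claw_free_structure_general G h1 h2 h3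
end
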